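/- Let α > −1 and n ≥ 1, let a, b ∈ ℂ \ {0} and c ∈ 𝔻, set ψ(z) = a z^n/(n! (1 − conj(c) z)^{n+α+2}) and φ(z) = c + b z/(1 − conj(c) z), assume φ maps 𝔻 into 𝔻 and D_{ψ,φ,n} is bounded and normal on A_α². If c = 0, then D_{ψ,φ,n} is J-symmetric; and if c ≠ 0, then D_{ψ,φ,n} is C_{e^{−2iθ}z}J-symmetric, where θ = Arg(c) and C_{e^{−2iθ}z} f(z) = f(e^{−2iθ} z). -/

import Mathlib

open Complex Metric Set

noncomputable section

/-- The open unit disk in `ℂ`. -/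
def unitDisk : Set ℂ := Metric.ball 0 1

/-- `wb2 α j` is `β(j)² = j!·Γ(α+2)/Γ(j+α+2)`, the square of the norm of `z^j` in `A_α²`. -/
def wb2 (α : ℝ) (j : ℕ) : ℝ :=
  (j.factorial : ℝ) * Real.Gamma (α + 2) / Real.Gamma ((j : ℝ) + α + 2)

/-- The `j`-th Taylor coefficient of `f` at `0`. -/
def tcoeff (f : ℂ → ℂ) (j : ℕ) : ℂ := iteratedDeriv j f 0 / (j.factorial : ℂ)

/-- An abstract model of the weighted Bergman space `A_α²`: a complex Hilbert space `H`
whose elements are (identified with) the analytic functions on the unit disk with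
square-summable weighted Taylor coefficients, with the weighted `ℓ²` inner product. -/
structure BergmanModel (α : ℝ) (H : Type) [NormedAddCommGroup H]
    [InnerProductSpace ℂ H] where
  emb : H →ₗ[ℂ] (ℂ → ℂ)
  analyticOn : ∀ f : H, AnalyticOnNhd ℂ (emb f) unitDisk
  summable_norm : ∀ f : H, Summable (fun j => ‖tcoeff (emb f) j‖ ^ 2 * wb2 α j)
  inj : ∀ f g : H, Set.EqOn (emb f) (emb g) unitDisk → f = g
  exists_rep : ∀ F : ℂ → ℂ, AnalyticOnNhd ℂ F unitDisk →
      Summable (fun j => ‖tcoeff F j‖ ^ 2 * wb2 α j) →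
      ∃ f : H, Set.EqOn (emb f) F unitDisk
  inner_eq : ∀ f g : H,
      (@inner ℂ H _ f g) =
        ∑' j : ℕ, (starRingEnd ℂ) (tcoeff (emb f) j) * tcoeff (emb g) j * (wb2 α j : ℂ)

/-- The derivative-evaluation kernel `K_w^{(m)}(z) = m!·z^m / (β(m)²·(1-conj(w)·z)^(m+α+2))`. -/
def kern (α : ℝ) (m : ℕ) (w z : ℂ) : ℂ :=
  (m.factorial : ℂ) * z ^ m /
    ((wb2 α m : ℂ) * (1 - (starRingEnd ℂ) w * z) ^ ((m : ℂ) + (α : ℂ) + 2))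

/-- The argument of a complex number, normalized to lie in `[0, 2π)` (with `Arg 0 = 0`). -/
def arg2pi (c : ℂ) : ℝ :=
  if Complex.arg c < 0 then Complex.arg c + 2 * Real.pi else Complex.arg c

/-!
Write `K⁽ᵐ⁾_w` for the kernel representing `f ↦ f⁽ᵐ⁾(w)`, whose formula is `kern α m w`. Exchanging
variable and parameter gives `(K⁽⁰⁾_p)⁽ⁿ⁾(q) = conj (K⁽ⁿ⁾_q(p))`, so `D_{ψ,φ,n}` sends
`K⁽⁰⁾_{conj(uw)}` to `uⁿ ψ(w) K⁽ⁿ⁾_{conj(uφ(w))}` exactly when `ψ(z) wⁿ / (1 - uφ(z)w)^{n+α+2}` is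
symmetric in `z` and `w`. Pairing these kernels with `Cf`, where `Cf(z) = conj(f(conj(uz)))` and
`|u| = 1`, turns that symmetry into `C D* C = D`.

For the given `ψ` and `φ`, if `uc = conj(c)`, the symmetry reduces to that of
`(1 - conj(c)z)(1 - uφ(z)w) = 1 - uc(z + w) + (u²c² - ub)zw`. This covers both cases of the theorem:
`u = 1` when `c = 0`, and `u = e^{-2iθ}` otherwise.
-/

open scoped ComplexConjugate

section IteratedDeriv

variable {𝕜 : Type*} [NontriviallyNormedField 𝕜]

theorem iteratedDeriv_comp_mul_left {E : Type*} [NormedAddCommGroup E] [NormedSpace 𝕜 E]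
    (n : ℕ) (u : 𝕜) (f : 𝕜 → E) :
    iteratedDeriv n (fun z => f (u * z)) = fun z => u ^ n • iteratedDeriv n f (u * z) := by
  induction n with
  | zero => simp
  | succ n ih =>
    ext z
    rw [iteratedDeriv_succ, ih, deriv_fun_const_smul_field,
      deriv_comp_mul_left u (iteratedDeriv n f), iteratedDeriv_succ, smul_smul, pow_succ]

theorem iteratedDeriv_conj_conj {K : Type*} [RCLike K] (n : ℕ) (f : K → K) :
    iteratedDeriv n (conj ∘ f ∘ conj) = conj ∘ iteratedDeriv n f ∘ conj := by
  induction n with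
  | zero => simp
  | succ n ih => rw [iteratedDeriv_succ, ih, deriv_conj_conj, iteratedDeriv_succ]

theorem iteratedDeriv_conj_comp_conj_mul {K : Type*} [RCLike K] (n : ℕ) (u : K) (f : K → K)
    (z : K) : iteratedDeriv n (fun z => conj (f (conj (u * z)))) z =
      u ^ n * conj (iteratedDeriv n f (conj (u * z))) := by
  simpa [iteratedDeriv_conj_conj] using
    congrFun (iteratedDeriv_comp_mul_left n u (conj ∘ f ∘ conj)) z

theorem iteratedDeriv_iteratedDeriv {E : Type*} [NormedAddCommGroup E] [NormedSpace 𝕜 E]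
    (m n : ℕ) (f : 𝕜 → E) : iteratedDeriv m (iteratedDeriv n f) = iteratedDeriv (m + n) f := by
  simp only [iteratedDeriv_eq_iterate, Function.iterate_add_apply]

end IteratedDeriv

section Cpow

theorem mul_cpow_of_arg_add_mem {x y : ℂ} (hx : x ≠ 0) (hy : y ≠ 0)
    (hxy : x.arg + y.arg ∈ Ioc (-Real.pi) Real.pi) (s : ℂ) : (x * y) ^ s = x ^ s * y ^ s := by
  rw [cpow_def_of_ne_zero (mul_ne_zero hx hy), cpow_def_of_ne_zero hx, cpow_def_of_ne_zero hy,
    log_mul hx hy hxy, add_mul, exp_add]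

theorem mul_cpow_of_re_pos {x y : ℂ} (hx : 0 < x.re) (hy : 0 < y.re) (s : ℂ) :
    (x * y) ^ s = x ^ s * y ^ s := by
  have hx_arg := abs_lt.1 (abs_arg_lt_pi_div_two_iff.2 (Or.inl hx))
  have hy_arg := abs_lt.1 (abs_arg_lt_pi_div_two_iff.2 (Or.inl hy))
  exact mul_cpow_of_arg_add_mem (ne_zero_of_re_pos hx) (ne_zero_of_re_pos hy)
    ⟨by linarith, by linarith⟩ s

end Cpow

section UnitDisk

theorem mem_unitDisk_iff {z : ℂ} : z ∈ unitDisk ↔ ‖z‖ < 1 := by simp [unitDisk]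

theorem isOpen_unitDisk : IsOpen unitDisk := isOpen_ball

theorem zero_mem_unitDisk : (0 : ℂ) ∈ unitDisk := by simp [mem_unitDisk_iff]

theorem conj_mem_unitDisk {z : ℂ} (hz : z ∈ unitDisk) : conj z ∈ unitDisk := by
  rwa [mem_unitDisk_iff, RCLike.norm_conj, ← mem_unitDisk_iff]

theorem mul_mem_unitDisk {q z : ℂ} (hq : ‖q‖ ≤ 1) (hz : z ∈ unitDisk) : q * z ∈ unitDisk := by
  rw [mem_unitDisk_iff] at hz ⊢
  rw [norm_mul]
  exact (mul_le_of_le_one_left (norm_nonneg z) hq).trans_lt hz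

theorem mul_mem_unitDisk_of_mem {p z : ℂ} (hp : p ∈ unitDisk) (hz : z ∈ unitDisk) :
    p * z ∈ unitDisk :=
  mul_mem_unitDisk (mem_unitDisk_iff.1 hp).le hz

theorem one_sub_re_pos {z : ℂ} (hz : z ∈ unitDisk) : 0 < (1 - z).re := by
  have := (re_le_norm z).trans_lt (mem_unitDisk_iff.1 hz)
  simpa using this

end UnitDisk

section TaylorCoefficients

open scoped Nat

theorem tcoeff_congr {f g : ℂ → ℂ} (h : EqOn f g unitDisk) (j : ℕ) : tcoeff f j = tcoeff g j := by
  rw [tcoeff, tcoeff, h.iteratedDeriv_of_isOpen isOpen_unitDisk j zero_mem_unitDisk]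

theorem tcoeff_const_mul (r : ℂ) (f : ℂ → ℂ) (j : ℕ) :
    tcoeff (fun z => r * f z) j = r * tcoeff f j := by
  simp only [tcoeff, iteratedDeriv_const_mul_field, mul_div_assoc]

theorem tcoeff_comp_mul_left (q : ℂ) (f : ℂ → ℂ) (j : ℕ) :
    tcoeff (fun z => f (q * z)) j = q ^ j * tcoeff f j := by
  simp only [tcoeff, iteratedDeriv_comp_mul_left, mul_zero, smul_eq_mul, mul_div_assoc]

theorem tcoeff_pow_mul {f : ℂ → ℂ} (hf : AnalyticAt ℂ f 0) (n j : ℕ) :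
    tcoeff (fun z => z ^ n * f z) j = if n ≤ j then tcoeff f (j - n) else 0 := by
  have leibniz : iteratedDeriv j (fun z => z ^ n * f z) 0 = ∑ i ∈ Finset.range (j + 1),
      if i = n then (j.choose n : ℂ) * n ! * iteratedDeriv (j - n) f 0 else 0 := by
    rw [iteratedDeriv_fun_mul (by fun_prop) hf.contDiffAt]
    refine Finset.sum_congr rfl fun i _ => ?_
    rw [iteratedDeriv_fun_pow_zero]
    split_ifs with h <;> simp [h]
  rw [tcoeff, leibniz, Finset.sum_ite_eq']
  by_cases hnj : n ≤ j
  · have choose_mul_factorial_ne_zero : (j.choose n * n ! : ℂ) ≠ 0 := by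
      exact_mod_cast mul_ne_zero (Nat.choose_pos hnj).ne' (Nat.factorial_ne_zero n)
    rw [if_pos (Finset.mem_range_succ_iff.2 hnj), if_pos hnj, tcoeff,
      ← Nat.choose_mul_factorial_mul_factorial hnj]
    push_cast
    rw [mul_div_mul_left _ _ choose_mul_factorial_ne_zero]
  · simp [hnj]

theorem tcoeff_eq_coeff {f : ℂ → ℂ} {p : FormalMultilinearSeries ℂ ℂ ℂ}
    (h : HasFPowerSeriesAt f p 0) (j : ℕ) : tcoeff f j = p.coeff j := by
  obtain ⟨_, h_ball⟩ := h
  have taylor : j ! • p.coeff j = iteratedDeriv j f 0 := h_ball.factorial_smul 1 j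
  rw [tcoeff, ← taylor, nsmul_eq_mul,
    mul_div_cancel_left₀ _ (Nat.cast_ne_zero.2 j.factorial_ne_zero)]

theorem tcoeff_inv_one_sub_cpow (s : ℂ) (j : ℕ) :
    tcoeff (fun z => ((1 - z) ^ s)⁻¹) j = (ascPochhammer ℂ j).eval s / j ! := by
  have binomial_series := (one_div_one_sub_cpow_hasFPowerSeriesOnBall_zero s).hasFPowerSeriesAt
  simp only [one_div] at binomial_series
  rw [tcoeff_eq_coeff binomial_series, FormalMultilinearSeries.coeff_ofScalars,
    ← Ring.multichoose_eq, eq_div_iff (Nat.cast_ne_zero.2 j.factorial_ne_zero), mul_comm,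
    ← nsmul_eq_mul, Ring.factorial_nsmul_multichoose_eq_ascPochhammer,
    Polynomial.ascPochhammer_smeval_eq_eval]

theorem factorial_mul_descFactorial_add (n i : ℕ) :
    i ! * (n + i).descFactorial n = (n + i)! := by
  simpa using Nat.factorial_mul_descFactorial (Nat.le_add_right n i)

theorem hasSum_descFactorial_mul_tcoeff {g : ℂ → ℂ} (hg : AnalyticOnNhd ℂ g unitDisk) (n : ℕ)
    {p : ℂ} (hp : p ∈ unitDisk) :
    HasSum (fun j => (j.descFactorial n : ℂ) * tcoeff g j * p ^ (j - n))
      (iteratedDeriv n g p) := by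
  have analytic : AnalyticOnNhd ℂ (iteratedDeriv n g) unitDisk := by
    rw [iteratedDeriv_eq_iterate]
    exact hg.iterated_deriv n
  have taylor := hasSum_taylorSeries_on_ball (r := 1)
    (fun z hz => (analytic z hz).differentiableAt.differentiableWithinAt) hp
  have initial_terms : ∑ j ∈ Finset.range n,
      (j.descFactorial n : ℂ) * tcoeff g j * p ^ (j - n) = 0 :=
    Finset.sum_eq_zero fun j hj => by simp [Nat.descFactorial_of_lt (Finset.mem_range.1 hj)]
  rw [← hasSum_nat_add_iff' n, initial_terms, sub_zero]
  convert taylor using 2 with i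
  have descFactorial_ne_zero : ((n + i).descFactorial n : ℂ) ≠ 0 :=
    Nat.cast_ne_zero.2 (Nat.descFactorial_pos.2 (Nat.le_add_right n i)).ne'
  rw [iteratedDeriv_iteratedDeriv, Nat.add_sub_cancel, add_comm i n, tcoeff,
    ← factorial_mul_descFactorial_add, smul_eq_mul, smul_eq_mul, sub_zero]
  push_cast
  field_simp

end TaylorCoefficients

section Kernel

open scoped Nat

variable {α : ℝ}

theorem wb2_pos (hα : -2 < α) (j : ℕ) : 0 < wb2 α j := by
  have gamma_pos := Real.Gamma_pos_of_pos (show 0 < α + 2 by linarith)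
  have gamma_add_pos := Real.Gamma_pos_of_pos
    (show 0 < j + α + 2 by linarith [j.cast_nonneg (α := ℝ)])
  unfold wb2
  positivity

theorem wb2_mul_ascPochhammer (hα : -2 < α) (n i : ℕ) :
    (wb2 α (n + i) : ℂ) * (ascPochhammer ℂ i).eval ((n : ℂ) + α + 2) * n ! =
      (n + i)! * wb2 α n := by
  have ne_neg_nat (m k : ℕ) : (m : ℂ) + α + 2 ≠ -k := fun h => by
    have hre : (m : ℝ) + α + 2 = -k := by exact_mod_cast h
    linarith [m.cast_nonneg (α := ℝ), k.cast_nonneg (α := ℝ)]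
  have gamma_ne_zero (m : ℕ) : Gamma ((m : ℂ) + α + 2) ≠ 0 := Gamma_ne_zero (ne_neg_nat m)
  have wb2_eq (m : ℕ) :
      (wb2 α m : ℂ) = m ! * Gamma ((α : ℂ) + 2) / Gamma ((m : ℂ) + α + 2) := by
    simp only [wb2, ofReal_div, ofReal_mul, ofReal_natCast, ← Gamma_ofReal, ofReal_add,
      ofReal_ofNat]
  have shift : ((n + i : ℕ) : ℂ) + α + 2 = (n : ℂ) + α + 2 + i := by push_cast; ring
  have gamma_shift_ne_zero := gamma_ne_zero (n + i)
  rw [wb2_eq, wb2_eq, ← Gamma_add_nat_div_Gamma_eq _ (ne_neg_nat n)]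
  rw [shift] at gamma_shift_ne_zero ⊢
  field_simp [gamma_ne_zero n]

theorem kern_mul_right (n : ℕ) (p u z : ℂ) :
    kern α n p (u * z) = u ^ n * kern α n (conj u * p) z := by
  simp only [kern, map_mul, conj_conj]
  ring_nf

theorem conj_kern (n : ℕ) {p z : ℂ} (hp : p ∈ unitDisk) (hz : z ∈ unitDisk) :
    conj (kern α n p z) = kern α n (conj p) (conj z) := by
  have arg_ne_pi : (1 - conj p * z).arg ≠ Real.pi := slitPlane_arg_ne_pi <| Or.inl <|
    one_sub_re_pos (mul_mem_unitDisk_of_mem (conj_mem_unitDisk hp) hz)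
  have conj_pow := conj_cpow _ (n + α + 2) arg_ne_pi
  simp only [map_sub, map_add, map_mul, map_one, conj_conj, conj_ofReal, map_natCast,
    map_ofNat] at conj_pow
  simp only [kern, map_div₀, map_mul, map_pow, map_natCast, conj_ofReal, conj_conj, conj_pow]

theorem analyticOnNhd_kern (hα : -2 < α) (n : ℕ) {p : ℂ} (hp : p ∈ unitDisk) :
    AnalyticOnNhd ℂ (kern α n p) unitDisk := by
  intro z hz
  have hslit : 1 - conj p * z ∈ slitPlane :=
    Or.inl (one_sub_re_pos (mul_mem_unitDisk_of_mem (conj_mem_unitDisk hp) hz))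
  have denominator_ne_zero : (wb2 α n : ℂ) * (1 - conj p * z) ^ ((n : ℂ) + α + 2) ≠ 0 :=
    mul_ne_zero (ofReal_ne_zero.2 (wb2_pos hα n).ne')
      (cpow_ne_zero_iff.2 (Or.inl (slitPlane_ne_zero hslit)))
  unfold kern
  fun_prop (disch := assumption)

theorem tcoeff_kern (hα : -2 < α) (n : ℕ) (p : ℂ) (j : ℕ) :
    tcoeff (kern α n p) j = j.descFactorial n / wb2 α j * conj p ^ (j - n) := by
  have factor : kern α n p = fun z => (n ! / wb2 α n : ℂ) *
      (z ^ n * ((1 - conj p * z) ^ ((n : ℂ) + α + 2))⁻¹) := by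
    ext z
    simp only [kern]
    ring
  have analytic : AnalyticAt ℂ (fun z => ((1 - conj p * z) ^ ((n : ℂ) + α + 2))⁻¹) 0 := by
    have hslit : 1 - conj p * 0 ∈ slitPlane := by simp
    have cpow_ne_zero : (1 - conj p * 0) ^ ((n : ℂ) + α + 2) ≠ 0 :=
      cpow_ne_zero_iff.2 (Or.inl (slitPlane_ne_zero hslit))
    fun_prop (disch := assumption)
  rw [factor, tcoeff_const_mul, tcoeff_pow_mul analytic,
    tcoeff_comp_mul_left (conj p) fun z => ((1 - z) ^ ((n : ℂ) + α + 2))⁻¹,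
    tcoeff_inv_one_sub_cpow]
  split_ifs with hnj
  · obtain ⟨i, rfl⟩ := Nat.exists_eq_add_of_le hnj
    have wb2_ne_zero (m : ℕ) : (wb2 α m : ℂ) ≠ 0 := ofReal_ne_zero.2 (wb2_pos hα m).ne'
    have wb2_n_ne_zero := wb2_ne_zero n
    have wb2_add_ne_zero := wb2_ne_zero (n + i)
    have factorial_ne_zero : (i ! : ℂ) ≠ 0 := Nat.cast_ne_zero.2 i.factorial_ne_zero
    have ratio := wb2_mul_ascPochhammer hα n i
    rw [← factorial_mul_descFactorial_add, Nat.cast_mul] at ratio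
    rw [Nat.add_sub_cancel_left]
    field_simp
    linear_combination conj p ^ i * ratio
  · simp [Nat.descFactorial_of_lt (not_le.1 hnj)]

theorem hasSum_conj_tcoeff_kern_mul (hα : -2 < α) (n : ℕ) {p : ℂ} (hp : p ∈ unitDisk)
    {g : ℂ → ℂ} (hg : AnalyticOnNhd ℂ g unitDisk) :
    HasSum (fun j => conj (tcoeff (kern α n p) j) * tcoeff g j * (wb2 α j : ℂ))
      (iteratedDeriv n g p) := by
  convert hasSum_descFactorial_mul_tcoeff hg n hp using 2 with j
  have wb2_ne_zero : (wb2 α j : ℂ) ≠ 0 := ofReal_ne_zero.2 (wb2_pos hα j).ne'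
  simp only [tcoeff_kern hα, map_mul, map_div₀, map_pow, map_natCast, conj_ofReal, conj_conj]
  field_simp

theorem iteratedDeriv_kern_eq_conj (hα : -2 < α) (m n : ℕ) {p q : ℂ} (hp : p ∈ unitDisk)
    (hq : q ∈ unitDisk) :
    iteratedDeriv n (kern α m p) q = conj (iteratedDeriv m (kern α n q) p) := by
  have pairing := hasSum_conj_tcoeff_kern_mul hα n hq (analyticOnNhd_kern hα m hp)
  have flipped := hasSum_conj'.2
    (hasSum_conj_tcoeff_kern_mul hα m hp (analyticOnNhd_kern hα n hq))
  refine pairing.unique ?_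
  convert flipped using 2 with j
  simp only [map_mul, conj_conj, conj_ofReal]
  ring

theorem iteratedDeriv_kern_zero (hα : -2 < α) (n : ℕ) {p q : ℂ} (hp : p ∈ unitDisk)
    (hq : q ∈ unitDisk) : iteratedDeriv n (kern α 0 p) q = kern α n (conj q) (conj p) := by
  rw [iteratedDeriv_kern_eq_conj hα 0 n hp hq, iteratedDeriv_zero, conj_kern n hq hp]

theorem summable_norm_sq_tcoeff_kern (hα : -2 < α) (n : ℕ) {p : ℂ} (hp : p ∈ unitDisk) :
    Summable fun j => ‖tcoeff (kern α n p) j‖ ^ 2 * wb2 α j := by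
  refine summable_ofReal.1 ?_
  convert (hasSum_conj_tcoeff_kern_mul hα n hp (analyticOnNhd_kern hα n hp)).summable
    using 2 with j
  rw [conj_mul', ofReal_mul, ofReal_pow]

end Kernel

namespace BergmanModel

variable {α : ℝ} {H : Type} [NormedAddCommGroup H] [InnerProductSpace ℂ H]

theorem exists_kern (M : BergmanModel α H) (hα : -2 < α) (n : ℕ) {p : ℂ} (hp : p ∈ unitDisk) :
    ∃ k : H, EqOn (M.emb k) (kern α n p) unitDisk ∧
      ∀ g : H, inner ℂ k g = iteratedDeriv n (M.emb g) p := by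
  obtain ⟨k, hk⟩ := M.exists_rep _ (analyticOnNhd_kern hα n hp)
    (summable_norm_sq_tcoeff_kern hα n hp)
  refine ⟨k, hk, fun g => ?_⟩
  simp only [M.inner_eq, tcoeff_congr hk]
  exact (hasSum_conj_tcoeff_kern_mul hα n hp (M.analyticOn g)).tsum_eq

theorem conj_adjoint_conj_eq_of_kern_symm [CompleteSpace H] (M : BergmanModel α H) (hα : -2 < α)
    {n : ℕ} {ψ φ : ℂ → ℂ} (hφm : ∀ z ∈ unitDisk, φ z ∈ unitDisk) {T : H →L[ℂ] H}
    (hT : ∀ f : H, ∀ z ∈ unitDisk, M.emb (T f) z = ψ z * iteratedDeriv n (M.emb f) (φ z))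
    {u : ℂ} (hu : ‖u‖ = 1) {C : H → H}
    (hC : ∀ f : H, ∀ z ∈ unitDisk, M.emb (C f) z = conj (M.emb f (conj (u * z))))
    (h_symm : ∀ z ∈ unitDisk, ∀ w ∈ unitDisk,
      ψ z * kern α n (conj (u * φ z)) w = ψ w * kern α n (conj (u * φ w)) z) (f : H) :
    C (ContinuousLinearMap.adjoint T (C f)) = T f := by
  refine M.inj _ _ fun w hw => ?_
  have reflect_mem {z : ℂ} (hz : z ∈ unitDisk) : conj (u * z) ∈ unitDisk :=
    conj_mem_unitDisk (mul_mem_unitDisk hu.le hz)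
  obtain ⟨k, hk, hk_inner⟩ := M.exists_kern hα 0 (reflect_mem hw)
  obtain ⟨l, hl, hl_inner⟩ := M.exists_kern hα n (reflect_mem (hφm w hw))
  have T_kern : T k = (ψ w * u ^ n) • l := by
    refine M.inj _ _ fun z hz => ?_
    rw [hT k z hz, hk.iteratedDeriv_of_isOpen isOpen_unitDisk n (hφm z hz),
      iteratedDeriv_kern_zero hα n (reflect_mem hw) (hφm z hz), conj_conj, kern_mul_right,
      ← map_mul, map_smul, Pi.smul_apply, hl hz, smul_eq_mul]
    linear_combination u ^ n * h_symm z hz w hw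
  have conj_u_mul_u : conj u * u = 1 := by rw [conj_mul', hu]; simp
  have reflect_reflect : conj (u * conj (u * φ w)) = φ w := by
    rw [map_mul, conj_conj, ← mul_assoc, conj_u_mul_u, one_mul]
  have deriv_C : iteratedDeriv n (M.emb (C f)) (conj (u * φ w)) =
      u ^ n * conj (iteratedDeriv n (M.emb f) (φ w)) := by
    rw [EqOn.iteratedDeriv_of_isOpen (hC f) isOpen_unitDisk n (reflect_mem (hφm w hw)),
      iteratedDeriv_conj_comp_conj_mul, reflect_reflect]
  calc M.emb (C (ContinuousLinearMap.adjoint T (C f))) w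
      = conj (inner ℂ k (ContinuousLinearMap.adjoint T (C f))) := by
        rw [hC _ w hw, hk_inner, iteratedDeriv_zero]
    _ = conj (conj (ψ w * u ^ n) * (u ^ n * conj (iteratedDeriv n (M.emb f) (φ w)))) := by
        rw [ContinuousLinearMap.adjoint_inner_right, T_kern, inner_smul_left, hl_inner, deriv_C]
    _ = (conj u * u) ^ n * (ψ w * iteratedDeriv n (M.emb f) (φ w)) := by
        simp only [map_mul, map_pow, conj_conj]
        ring
    _ = M.emb (T f) w := by rw [conj_u_mul_u, one_pow, one_mul, hT f w hw]

end BergmanModel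

theorem one_sub_mul_one_sub_symm {K : Type*} [Field K] {b c u z w : K} (hz : 1 - u * c * z ≠ 0)
    (hw : 1 - u * c * w ≠ 0) :
    (1 - u * c * z) * (1 - u * (c + b * z / (1 - u * c * z)) * w) =
      (1 - u * c * w) * (1 - u * (c + b * w / (1 - u * c * w)) * z) := by
  field_simp
  ring

theorem weight_mul_kern_symm {α : ℝ} {n : ℕ} {a b c u : ℂ} (hc : c ∈ unitDisk) (hu : ‖u‖ ≤ 1)
    (huc : u * c = conj c) {ψ φ : ℂ → ℂ}
    (hψ : ∀ z ∈ unitDisk, ψ z = a * z ^ n /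
      ((n.factorial : ℂ) * (1 - conj c * z) ^ ((n : ℂ) + (α : ℂ) + 2)))
    (hφ : ∀ z ∈ unitDisk, φ z = c + b * z / (1 - conj c * z))
    (hφm : ∀ z ∈ unitDisk, φ z ∈ unitDisk) {z w : ℂ} (hz : z ∈ unitDisk) (hw : w ∈ unitDisk) :
    ψ z * kern α n (conj (u * φ z)) w = ψ w * kern α n (conj (u * φ w)) z := by
  have weight_re_pos {x : ℂ} (hx : x ∈ unitDisk) : 0 < (1 - conj c * x).re :=
    one_sub_re_pos (mul_mem_unitDisk_of_mem (conj_mem_unitDisk hc) hx)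
  have kern_re_pos {x y : ℂ} (hx : x ∈ unitDisk) (hy : y ∈ unitDisk) :
      0 < (1 - u * φ x * y).re :=
    one_sub_re_pos (mul_mem_unitDisk_of_mem (mul_mem_unitDisk hu (hφm x hx)) hy)
  have product {x y : ℂ} (hx : x ∈ unitDisk) (hy : y ∈ unitDisk) :
      ψ x * kern α n (conj (u * φ x)) y = a * (x * y) ^ n / (wb2 α n *
        ((1 - conj c * x) * (1 - u * φ x * y)) ^ ((n : ℂ) + α + 2)) := by
    rw [mul_cpow_of_re_pos (weight_re_pos hx) (kern_re_pos hx hy), hψ x hx, kern, conj_conj]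
    have factorial_ne_zero : (n.factorial : ℂ) ≠ 0 := Nat.cast_ne_zero.2 n.factorial_ne_zero
    rw [mul_pow]
    field_simp
  have bases_eq : (1 - conj c * z) * (1 - u * φ z * w) = (1 - conj c * w) * (1 - u * φ w * z) := by
    have hz_ne := ne_zero_of_re_pos (weight_re_pos hz)
    have hw_ne := ne_zero_of_re_pos (weight_re_pos hw)
    rw [hφ z hz, hφ w hw]
    rw [← huc] at hz_ne hw_ne ⊢
    exact one_sub_mul_one_sub_symm hz_ne hw_ne
  rw [product hz hw, product hw hz, bases_eq, mul_comm z w]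

theorem exp_neg_two_arg2pi_mul_I (c : ℂ) :
    exp (-(2 * (arg2pi c : ℂ)) * I) = exp (-(2 * (arg c : ℂ)) * I) := by
  unfold arg2pi
  split_ifs
  · exact exp_eq_exp_iff_exists_int.2 ⟨-2, by push_cast; ring⟩
  · rfl

theorem exp_neg_two_arg2pi_mul_I_mul_self (c : ℂ) :
    exp (-(2 * (arg2pi c : ℂ)) * I) * c = conj c := by
  have polar := norm_mul_exp_arg_mul_I c
  calc exp (-(2 * (arg2pi c : ℂ)) * I) * c
      = ‖c‖ * (exp (-(2 * (arg c : ℂ)) * I) * exp (arg c * I)) := by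
        rw [exp_neg_two_arg2pi_mul_I, mul_left_comm, polar]
    _ = ‖c‖ * exp (conj (arg c * I)) := by
        rw [← exp_add, map_mul, conj_ofReal, conj_I]
        ring_nf
    _ = conj c := by rw [exp_conj, ← conj_ofReal ‖c‖, ← map_mul, polar]

theorem stmt_16_general {α : ℝ} (hα : -2 < α) {n : ℕ}
    {H : Type} [NormedAddCommGroup H] [InnerProductSpace ℂ H] [CompleteSpace H]
    (M : BergmanModel α H) {a b c u : ℂ} (hc : c ∈ unitDisk) (hu : ‖u‖ = 1)
    (huc : u * c = conj c) {ψ φ : ℂ → ℂ}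
    (hψ : ∀ z ∈ unitDisk, ψ z = a * z ^ n /
      ((n.factorial : ℂ) * (1 - conj c * z) ^ ((n : ℂ) + (α : ℂ) + 2)))
    (hφ : ∀ z ∈ unitDisk, φ z = c + b * z / (1 - conj c * z))
    (hφm : ∀ z ∈ unitDisk, φ z ∈ unitDisk) {T : H →L[ℂ] H}
    (hT : ∀ f : H, ∀ z ∈ unitDisk, M.emb (T f) z = ψ z * iteratedDeriv n (M.emb f) (φ z))
    {C : H → H} (hC : ∀ f : H, ∀ z ∈ unitDisk, M.emb (C f) z = conj (M.emb f (conj (u * z))))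
    (f : H) : C (ContinuousLinearMap.adjoint T (C f)) = T f :=
  M.conj_adjoint_conj_eq_of_kern_symm hα hφm hT hu hC
    (fun _ hz _ hw => weight_mul_kern_symm hc hu.le huc hψ hφ hφm hz hw) f

/-- For `ψ(z) = a z^n/(n!(1-conj(c)z)^{n+α+2})` and
`φ(z) = c + bz/(1-conj(c)z)` with `a, b ≠ 0`, `c ∈ 𝔻`, `φ` a self-map of `𝔻`, and
`D_{ψ,φ,n}` bounded and normal on `A_α²`: if `c = 0` then `D_{ψ,φ,n}` is `J`-symmetric,
and if `c ≠ 0` then it is `C_{e^{-2iθ}z}J`-symmetric, where `θ = Arg(c)`. -/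
theorem stmt_16 (α : ℝ) (hα : -1 < α) (n : ℕ) (hn : 1 ≤ n)
    (H : Type) [NormedAddCommGroup H] [InnerProductSpace ℂ H] [CompleteSpace H]
    (M : BergmanModel α H)
    (a b c : ℂ) (ha : a ≠ 0) (hb : b ≠ 0) (hc : c ∈ unitDisk)
    (ψ φ : ℂ → ℂ)
    (hψ : ∀ z ∈ unitDisk, ψ z = a * z ^ n /
      ((n.factorial : ℂ) * (1 - (starRingEnd ℂ) c * z) ^ ((n : ℂ) + (α : ℂ) + 2)))
    (hφ : ∀ z ∈ unitDisk, φ z = c + b * z / (1 - (starRingEnd ℂ) c * z))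
    (hφm : ∀ z ∈ unitDisk, φ z ∈ unitDisk)
    (T : H →L[ℂ] H)
    (hT : ∀ f : H, ∀ z ∈ unitDisk,
      M.emb (T f) z = ψ z * iteratedDeriv n (M.emb f) (φ z))
    (hnormal : T.comp (ContinuousLinearMap.adjoint T)
      = (ContinuousLinearMap.adjoint T).comp T) :
    (c = 0 → ∀ Jm : H → H,
      (∀ f : H, ∀ z ∈ unitDisk,
        M.emb (Jm f) z = (starRingEnd ℂ) (M.emb f ((starRingEnd ℂ) z))) →
      ∀ f : H, Jm (ContinuousLinearMap.adjoint T (Jm f)) = T f) ∧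
    (c ≠ 0 → ∀ Cm : H → H,
      (∀ f : H, ∀ z ∈ unitDisk,
        M.emb (Cm f) z = (starRingEnd ℂ) (M.emb f
          ((starRingEnd ℂ) (Complex.exp (-(2 * (arg2pi c : ℂ)) * Complex.I) * z)))) →
      ∀ f : H, Cm (ContinuousLinearMap.adjoint T (Cm f)) = T f) := by
  have hα' : -2 < α := by linarith
  constructor
  · intro h0 _ hJ
    exact stmt_16_general hα' M hc (u := 1) (by simp) (by simp [h0]) hψ hφ hφm hT
      (by simpa using hJ)
  · intro _ _ hC
    exact stmt_16_general hα' M hc (by simp [norm_exp]) (exp_neg_two_arg2pi_mul_I_mul_self c)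
      hψ hφ hφm hT hC
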